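/- arXiv:1410.3115 — 3 statements merged into one kernel-verified Lean document; each statement's English description precedes it below -/
import Mathlib

section
/- Let x : [0,1] → ℝ, let 0 ≤ s < t ≤ 1, and let β ≥ 0 be such that H(x(u), x(v), x(w)) ≤ β for all s ≤ u < v < w ≤ t. Suppose η > 2β. Then for every integer N ≥ 1 and every choice of points s ≤ t₁ < t₂ ≤ t₃ < t₄ ≤ … ≤ t_{2N−1} < t_{2N} ≤ t satisfying |x(t_{2k}) − x(t_{2k−1})| > η for all k = 1, …, N, one has N ≤ (|x(t) − x(s)| + β)/(η − β). In particular the number of η-oscillations of x in [s,t] is at most (|x(t) − x(s)| + β)/(η − β). -/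
/-- `Hdist a b c` is the distance from `b` to the closed interval with endpoints `a` and `c`. -/
noncomputable def Hdist (a b c : ℝ) : ℝ :=
  max (min a c - min (min a c) b) (max (max a c) b - max a c)

theorem osc_up (x : ℝ → ℝ) (s t β η : ℝ) (hβ : 0 ≤ β) (hη : 2 * β < η)
    (hP : ∀ u v w : ℝ, s ≤ u → u ≤ v → v ≤ w → w ≤ t →
      (x u ≤ x v + β ∨ x w ≤ x v + β) ∧ (x v ≤ x u + β ∨ x v ≤ x w + β))
    (a b : ℕ → ℝ) (hs1 : s ≤ a 0) (hup : η < x (b 0) - x (a 0)) (n : ℕ) :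
    b n ≤ t → (∀ k, k ≤ n → a k < b k) → (∀ k, k < n → b k ≤ a (k + 1)) →
    (∀ k, k ≤ n → η < |x (b k) - x (a k)|) →
    s ≤ a n ∧ η < x (b n) - x (a n) ∧ x s + (n + 1) * (η - β) ≤ x (b n) := by
  induction n with
  | zero =>
    intro hb hlt _ _
    refine ⟨hs1, hup, ?_⟩
    have h1 := hP s (a 0) (b 0) le_rfl hs1 (hlt 0 le_rfl).le hb
    push_cast
    rcases h1.1 with h | h <;> linarith
  | succ n ih =>
    intro hb hlt hle hosc
    have l1 := hlt n (by omega)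
    have l2 := hle n (by omega)
    have l3 := hlt (n + 1) le_rfl
    obtain ⟨i1, i2, i3⟩ := ih (by linarith) (fun k hk => hlt k (by omega))
      (fun k hk => hle k (by omega)) (fun k hk => hosc k (by omega))
    have o := hosc (n + 1) le_rfl
    have p1 : x (b n) ≤ x (a (n + 1)) + β := by
      rcases (hP (a n) (b n) (a (n + 1)) i1 l1.le l2 (by linarith)).2 with h | h <;> linarith
    have p2 : x (b n) ≤ x (b (n + 1)) + β := by
      rcases (hP (a n) (b n) (b (n + 1)) i1 l1.le (by linarith) hb).2 with h | h <;> linarith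
    have p3 := (hP (b n) (a (n + 1)) (b (n + 1)) (by linarith) l2 l3.le hb).2
    have up : η < x (b (n + 1)) - x (a (n + 1)) := by
      rcases lt_abs.1 o with h | h
      · exact h
      · exfalso
        rcases p3 with h' | h' <;> linarith
    refine ⟨by linarith, up, ?_⟩
    push_cast
    linarith

theorem osc_up' (x : ℝ → ℝ) (s t β η : ℝ) (hβ : 0 ≤ β) (hη : 2 * β < η)
    (hP : ∀ u v w : ℝ, s ≤ u → u ≤ v → v ≤ w → w ≤ t →
      (x u ≤ x v + β ∨ x w ≤ x v + β) ∧ (x v ≤ x u + β ∨ x v ≤ x w + β))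
    (a b : ℕ → ℝ) (hs1 : s ≤ a 0) (hup : η < x (b 0) - x (a 0)) (n : ℕ)
    (hb : b n ≤ t) (hlt : ∀ k, k ≤ n → a k < b k) (hle : ∀ k, k < n → b k ≤ a (k + 1))
    (hosc : ∀ k, k ≤ n → η < |x (b k) - x (a k)|) :
    (n + 1) * (η - β) ≤ |x t - x s| + β := by
  obtain ⟨i1, i2, i3⟩ := osc_up x s t β η hβ hη hP a b hs1 hup n hb hlt hle hosc
  have h := (hP (a n) (b n) t i1 (hlt n le_rfl).le hb le_rfl).2
  have := le_abs_self (x t - x s)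
  rcases h with h | h <;> linarith

theorem stmt_2 (x : ℝ → ℝ) (s t β η : ℝ)
    (h0 : 0 ≤ s) (hst : s < t) (ht : t ≤ 1) (hβ : 0 ≤ β)
    (hH : ∀ u v w : ℝ, s ≤ u → u < v → v < w → w ≤ t → Hdist (x u) (x v) (x w) ≤ β)
    (hη : 2 * β < η)
    (N : ℕ) (hN : 1 ≤ N) (u : ℕ → ℝ)
    (hs1 : s ≤ u 1)
    (h2N : u (2 * N) ≤ t)
    (hlt : ∀ k, 1 ≤ k → k ≤ N → u (2 * k - 1) < u (2 * k))
    (hle : ∀ k, 1 ≤ k → k < N → u (2 * k) ≤ u (2 * k + 1))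
    (hosc : ∀ k, 1 ≤ k → k ≤ N → η < |x (u (2 * k)) - x (u (2 * k - 1))|) :
    (N : ℝ) ≤ (|x t - x s| + β) / (η - β) := by
  obtain ⟨n, rfl⟩ : ∃ n, N = n + 1 := ⟨N - 1, by omega⟩
  have hP : ∀ u v w : ℝ, s ≤ u → u ≤ v → v ≤ w → w ≤ t →
      (x u ≤ x v + β ∨ x w ≤ x v + β) ∧ (x v ≤ x u + β ∨ x v ≤ x w + β) := by
    intro u v w h1 h2 h3 h4
    rcases h2.eq_or_lt with rfl | h2
    · exact ⟨Or.inl (by linarith), Or.inl (by linarith)⟩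
    rcases h3.eq_or_lt with rfl | h3
    · exact ⟨Or.inr (by linarith), Or.inr (by linarith)⟩
    have h := hH u v w h1 h2 h3 h4
    unfold Hdist at h
    obtain ⟨ha, hb⟩ := max_le_iff.1 h
    have e1 := min_le_right (min (x u) (x w)) (x v)
    have e2 := le_max_right (max (x u) (x w)) (x v)
    constructor
    · exact min_le_iff.1 (by linarith)
    · rcases le_max_iff.1 (show x v - β ≤ max (x u) (x w) by linarith) with h | h
      · left; linarith
      · right; linarith
  rw [le_div_iff₀ (by linarith)]
  push_cast
  have hlt' : ∀ k, k ≤ n → u (2 * k + 1) < u (2 * k + 2) := fun k hk =>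
    hlt (k + 1) (by omega) (by omega)
  have hle' : ∀ k, k < n → u (2 * k + 2) ≤ u (2 * (k + 1) + 1) := fun k hk =>
    hle (k + 1) (by omega) (by omega)
  have hosc' : ∀ k, k ≤ n → η < |x (u (2 * k + 2)) - x (u (2 * k + 1))| := fun k hk =>
    hosc (k + 1) (by omega) (by omega)
  rcases lt_abs.1 (hosc' 0 (by omega)) with h | h
  · exact osc_up' x s t β η hβ hη hP (fun k => u (2 * k + 1)) (fun k => u (2 * k + 2)) hs1 h n
      h2N hlt' hle' hosc'
  · have := osc_up' (fun r => - x r) s t β η hβ hη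
      (fun p q r h1 h2 h3 h4 => by
        obtain ⟨c, d⟩ := hP p q r h1 h2 h3 h4
        constructor
        · rcases d with d | d
          · left; linarith
          · right; linarith
        · rcases c with d | d
          · left; linarith
          · right; linarith)
      (fun k => u (2 * k + 1)) (fun k => u (2 * k + 2)) hs1 (by linarith) n
      h2N hlt' hle' (fun k hk => by
        have := hosc' k hk
        rw [← abs_neg] at this
        convert this using 2
        ring)
    have e : |(-x t) - (-x s)| = |x t - x s| := by
      rw [← abs_neg (x t - x s)]
      congr 1
      ring
    rw [← e]
    exact this
end

section
/- Let {a_{n,j} : 1 ≤ j ≤ n, n ∈ ℕ} be an array of real numbers such that max_{1 ≤ j ≤ n} |a_{n,j}| → 0 as n → ∞. Then there exists a sequence of positive integers j_n with j_n ≤ n, j_n → ∞ and j_n/n → 0 such that Σ_{j=1}^{j_n} |a_{n,j}| → 0 as n → ∞. -/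
open Filter Topology

theorem stmt_4 (a : ℕ → ℕ → ℝ)
    (hmax : ∀ ε > 0, ∃ N : ℕ, ∀ n ≥ N, ∀ j, 1 ≤ j → j ≤ n → |a n j| < ε) :
    ∃ jseq : ℕ → ℕ,
      (∀ n, 1 ≤ n → 1 ≤ jseq n ∧ jseq n ≤ n) ∧
      Tendsto jseq atTop atTop ∧
      Tendsto (fun n => (jseq n : ℝ) / n) atTop (nhds 0) ∧
      Tendsto (fun n => ∑ j ∈ Finset.Icc 1 (jseq n), |a n j|) atTop (nhds 0) := by
  classical
  let Q : ℕ → ℕ → Prop := fun n k =>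
    k * k ≤ n ∧ ∀ j, 1 ≤ j → j ≤ n → |a n j| * ((k : ℝ) * k) ≤ 1
  let g : ℕ → ℕ := fun n => Nat.findGreatest (Q n) n
  have hQ : ∀ n, Q n (g n) := fun n =>
    Nat.findGreatest_spec (P := Q n) (Nat.zero_le n) (by simp [Q])
  have hgn : ∀ n, g n ≤ n := fun n => Nat.findGreatest_le n
  have hg : Tendsto g atTop atTop := by
    rw [tendsto_atTop]
    intro k
    obtain ⟨N, hN⟩ := hmax (1 / ((k : ℝ) * k + 1)) (by positivity)
    filter_upwards [eventually_ge_atTop N, eventually_ge_atTop (k * k), eventually_ge_atTop k]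
      with n h1 h2 h3
    refine Nat.le_findGreatest h3 ⟨h2, fun j hj hjn => ?_⟩
    have h := hN n h1 j hj hjn
    rw [lt_div_iff₀ (by positivity)] at h
    nlinarith [abs_nonneg (a n j)]
  have hinv : Tendsto (fun n => ((g n : ℝ))⁻¹) atTop (nhds 0) :=
    tendsto_inv_atTop_zero.comp (tendsto_natCast_atTop_atTop.comp hg)
  have hev : ∀ᶠ n in atTop, 1 ≤ g n := hg.eventually_ge_atTop 1
  refine ⟨fun n => max 1 (g n), fun n hn => ⟨le_max_left _ _, max_le hn (hgn n)⟩,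
    tendsto_atTop_mono (fun n => le_max_right _ _) hg, ?_, ?_⟩
  · refine squeeze_zero' (Eventually.of_forall fun n => by positivity) ?_ hinv
    filter_upwards [hev] with n hn
    rw [max_eq_right hn]
    have hp : (0 : ℝ) < g n := by exact_mod_cast hn
    have hnp : (0 : ℝ) < n := by exact_mod_cast hn.trans (hgn n)
    have h : ((g n : ℝ)) * g n ≤ n := by exact_mod_cast (hQ n).1
    rw [div_le_iff₀ hnp, inv_mul_eq_div, le_div_iff₀ hp]
    exact h
  · refine squeeze_zero' (Eventually.of_forall fun n =>
      Finset.sum_nonneg fun j _ => abs_nonneg _) ?_ hinv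
    filter_upwards [hev] with n hn
    rw [max_eq_right hn]
    have hp : (0 : ℝ) < g n := by exact_mod_cast hn
    have h : ∀ j ∈ Finset.Icc 1 (g n), |a n j| ≤ 1 / ((g n : ℝ) * g n) := by
      intro j hj
      rw [Finset.mem_Icc] at hj
      rw [le_div_iff₀ (by positivity)]
      exact (hQ n).2 j hj.1 (hj.2.trans (hgn n))
    refine (Finset.sum_le_card_nsmul _ _ _ h).trans (le_of_eq ?_)
    rw [Nat.card_Icc, nsmul_eq_mul, Nat.add_sub_cancel]
    field_simp
end

section
/- Let Y be a real random variable with P(|Y| > x) = x^{−α} h(x) for all x > 0, where α ∈ (1,2) and h is slowly varying at infinity. Then E[|Y|] < ∞ and there exists x₀ > 0 (depending on the law of Y) such that for all x > 0: E[|Y| 1{|Y| > x}] ≤ E[|Y|]·1{x ≤ x₀} + (2α/(α−1)) x^{1−α} h(x). -/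
open MeasureTheory Filter Topology

lemma aux_lam (α : ℝ) (hα : 1 < α) :
    ∃ l : ℝ, 1 < l ∧ l + (2 * α / (α - 1) - 1) * l * l ^ (-α) < 2 * α / (α - 1) := by
  set C := 2 * α / (α - 1) with hC
  have hC1 : C * (α - 1) = 2 * α := by
    rw [hC]; field_simp [show α - 1 ≠ 0 by linarith]
  have hd : HasDerivAt (fun l : ℝ => C - l - (C - 1) * l ^ (1 - α))
      (0 - 1 - (C - 1) * ((1 - α) * (1:ℝ) ^ (1 - α - 1))) 1 :=
    ((hasDerivAt_const _ _).sub (hasDerivAt_id _)).sub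
      ((Real.hasDerivAt_rpow_const (Or.inl one_ne_zero)).const_mul _)
  have hval : (0 - 1 - (C - 1) * ((1 - α) * (1:ℝ) ^ (1 - α - 1))) = α := by
    rw [Real.one_rpow]; linarith
  rw [hval] at hd
  have hs := hasDerivAt_iff_tendsto_slope.1 hd
  have hs2 : Tendsto (slope (fun l : ℝ => C - l - (C - 1) * l ^ (1 - α)) 1) (𝓝[>] 1) (𝓝 α) :=
    hs.mono_left (nhdsWithin_mono _ (fun x hx => ne_of_gt hx))
  have he := hs2.eventually (lt_mem_nhds (show 0 < α by linarith))
  obtain ⟨l, hl, hl1⟩ := (he.and self_mem_nhdsWithin).exists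
  have hl1 : 1 < l := hl1
  refine ⟨l, hl1, ?_⟩
  rw [slope_def_field, Real.one_rpow] at hl
  have h3 : 0 < l - 1 := by linarith
  have h2 := (div_pos_iff_of_pos_right h3).1 hl
  have h4 : l ^ (1 - α) = l * l ^ (-α) := by
    rw [sub_eq_add_neg, Real.rpow_add (by linarith), Real.rpow_one]
  rw [h4] at h2
  linarith

lemma aux_ind {Ω : Type*} [MeasurableSpace Ω] (μ : Measure Ω) [IsProbabilityMeasure μ]
    (Y : Ω → ℝ) (hY : Measurable Y) (C l x₀ : ℝ) (hC : 0 ≤ C) (hl : 1 < l) (hx₀ : 0 < x₀)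
    (hT : ∀ y ≥ x₀, l * μ.real {ω | y < |Y ω|} + (C - 1) * l * μ.real {ω | l * y < |Y ω|}
      ≤ C * μ.real {ω | y < |Y ω|}) (n : ℕ) :
    ∀ x ≥ x₀, ∫⁻ ω in {ω | x < |Y ω| ∧ |Y ω| ≤ l ^ n * x}, ENNReal.ofReal |Y ω| ∂μ
      ≤ ENNReal.ofReal (C * x * μ.real {ω | x < |Y ω|}) := by
  have hm : ∀ y : ℝ, MeasurableSet {ω | y < |Y ω|} := fun y =>
    measurableSet_lt measurable_const hY.abs
  induction n with
  | zero =>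
    intro x hx
    have : {ω | x < |Y ω| ∧ |Y ω| ≤ l ^ 0 * x} = ∅ := by
      ext ω; simp
    rw [this]; simp
  | succ n ih =>
    intro x hx
    have hxp : 0 < x := lt_of_lt_of_le hx₀ hx
    have hxl : x ≤ l * x := by nlinarith
    have hsub : {ω | x < |Y ω| ∧ |Y ω| ≤ l ^ (n+1) * x} ⊆
        ({ω | x < |Y ω|} \ {ω | l * x < |Y ω|}) ∪
          {ω | l * x < |Y ω| ∧ |Y ω| ≤ l ^ n * (l * x)} := by
      rintro ω ⟨h1, h2⟩
      by_cases h3 : l * x < |Y ω|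
      · right; exact ⟨h3, by rw [pow_succ] at h2; linarith⟩
      · left; exact ⟨h1, h3⟩
    have hd : μ.real ({ω | x < |Y ω|} \ {ω | l * x < |Y ω|}) =
        μ.real {ω | x < |Y ω|} - μ.real {ω | l * x < |Y ω|} :=
      measureReal_sdiff (fun ω hω => lt_of_le_of_lt hxl hω) (hm _)
    have h1 : ∫⁻ ω in ({ω | x < |Y ω|} \ {ω | l * x < |Y ω|}), ENNReal.ofReal |Y ω| ∂μ
        ≤ ENNReal.ofReal (l * x * (μ.real {ω | x < |Y ω|} - μ.real {ω | l * x < |Y ω|})) := by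
      calc _ ≤ ∫⁻ ω in ({ω | x < |Y ω|} \ {ω | l * x < |Y ω|}), ENNReal.ofReal (l * x) ∂μ := by
            apply setLIntegral_mono' ((hm _).diff (hm _))
            intro ω hω
            exact ENNReal.ofReal_le_ofReal (not_lt.1 hω.2)
        _ = _ := by
            rw [setLIntegral_const, ENNReal.ofReal_mul (p := l * x) (by positivity), ← hd, ofReal_measureReal]
    have hdn : 0 ≤ μ.real {ω | x < |Y ω|} - μ.real {ω | l * x < |Y ω|} := by
      rw [← hd]; exact measureReal_nonneg
    calc _ ≤ _ := lintegral_mono_set hsub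
      _ ≤ _ := lintegral_union_le _ _ _
      _ ≤ _ := add_le_add h1 (ih (l * x) (hx.le.trans hxl))
      _ = _ := (ENNReal.ofReal_add (by positivity) (by positivity)).symm
      _ ≤ _ := by
        apply ENNReal.ofReal_le_ofReal
        have := mul_le_mul_of_nonneg_left (hT x hx) hxp.le
        linarith

theorem stmt_8 {Ω : Type*} [MeasurableSpace Ω] (μ : Measure Ω) [IsProbabilityMeasure μ]
    (Y : Ω → ℝ) (hY : Measurable Y) (α : ℝ) (hα : 1 < α ∧ α < 2)
    (h : ℝ → ℝ) (hpos : ∀ x > 0, 0 < h x)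
    (hslow : ∀ l > 0, Tendsto (fun x => h (l * x) / h x) atTop (nhds 1))
    (htail : ∀ x > 0, (μ {ω | x < |Y ω|}).toReal = x ^ (-α) * h x) :
    Integrable Y μ ∧
    ∃ x₀ > 0, ∀ x > 0,
      ∫ ω in {ω | x < |Y ω|}, |Y ω| ∂μ ≤
        (if x ≤ x₀ then ∫ ω, |Y ω| ∂μ else 0) + (2 * α / (α - 1)) * x ^ (1 - α) * h x := by
  obtain ⟨l, hl, hlC⟩ := aux_lam α hα.1
  set C := 2 * α / (α - 1) with hCdef
  have hC : 0 ≤ C := div_nonneg (by linarith) (by linarith)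
  have hl0 : 0 < l := by linarith
  have hm : ∀ y : ℝ, MeasurableSet {ω | y < |Y ω|} := fun y =>
    measurableSet_lt measurable_const hY.abs
  have htail' : ∀ x > 0, μ.real {ω | x < |Y ω|} = x ^ (-α) * h x := htail
  have hlim : Tendsto (fun x => l + (C - 1) * l * l ^ (-α) * (h (l * x) / h x)) atTop
      (𝓝 (l + (C - 1) * l * l ^ (-α) * 1)) :=
    ((hslow l hl0).const_mul _).const_add _
  have hev := hlim.eventually (gt_mem_nhds (show _ < C by rw [mul_one]; exact hlC))
  obtain ⟨a, ha⟩ := eventually_atTop.1 hev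
  set x₀ := max a 1 with hx₀def
  have hx₀ : 0 < x₀ := lt_of_lt_of_le one_pos (le_max_right _ _)
  have hT : ∀ y ≥ x₀, l * μ.real {ω | y < |Y ω|} + (C - 1) * l * μ.real {ω | l * y < |Y ω|}
      ≤ C * μ.real {ω | y < |Y ω|} := by
    intro y hy
    have hyp : 0 < y := lt_of_lt_of_le hx₀ hy
    have h1 := ha y ((le_max_left _ _).trans hy)
    rw [htail' y hyp, htail' (l * y) (by positivity), Real.mul_rpow hl0.le hyp.le]
    have hh := hpos y hyp
    have hp : 0 < y ^ (-α) * h y := by positivity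
    have h2 := mul_le_mul_of_nonneg_right h1.le hp.le
    have h3 : (l + (C - 1) * l * l ^ (-α) * (h (l * y) / h y)) * (y ^ (-α) * h y)
      = l * (y ^ (-α) * h y) + (C - 1) * l * (l ^ (-α) * y ^ (-α) * h (l * y)) := by
      field_simp
    linarith
  have hsup : ∀ x ≥ x₀, ∫⁻ ω in {ω | x < |Y ω|}, ENNReal.ofReal |Y ω| ∂μ
      ≤ ENNReal.ofReal (C * x * μ.real {ω | x < |Y ω|}) := by
    intro x hx
    have hxp : 0 < x := lt_of_lt_of_le hx₀ hx
    have hU : {ω | x < |Y ω|} = ⋃ n : ℕ, {ω | x < |Y ω| ∧ |Y ω| ≤ l ^ n * x} := by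
      ext ω
      simp only [Set.mem_ofPred_eq, Set.mem_iUnion]
      constructor
      · intro h1
        obtain ⟨n, hn⟩ := pow_unbounded_of_one_lt (|Y ω| / x) hl
        exact ⟨n, h1, ((div_lt_iff₀ hxp).1 hn).le⟩
      · rintro ⟨n, h1, _⟩; exact h1
    have hmono : Monotone (fun n : ℕ => {ω | x < |Y ω| ∧ |Y ω| ≤ l ^ n * x}) := by
      intro n m hnm ω hω
      refine ⟨hω.1, hω.2.trans ?_⟩
      exact mul_le_mul_of_nonneg_right (pow_le_pow_right₀ hl.le hnm) hxp.le
    conv_lhs => rw [hU]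
    rw [setLIntegral_iUnion_of_directed _ hmono.directed_le]
    exact iSup_le fun n => aux_ind μ Y hY C l x₀ hC hl hx₀ hT n x hx
  have hint : Integrable Y μ := by
    refine ⟨hY.aestronglyMeasurable, ?_⟩
    rw [hasFiniteIntegral_iff_norm]
    simp only [Real.norm_eq_abs]
    rw [← lintegral_add_compl _ (hm x₀)]
    refine ENNReal.add_lt_top.2 ⟨(hsup x₀ le_rfl).trans_lt ENNReal.ofReal_lt_top, ?_⟩
    calc _ ≤ ∫⁻ ω in {ω | x₀ < |Y ω|}ᶜ, ENNReal.ofReal x₀ ∂μ := by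
          apply setLIntegral_mono' (hm _).compl
          intro ω hω
          exact ENNReal.ofReal_le_ofReal (not_lt.1 hω)
      _ < _ := by
          rw [setLIntegral_const]
          exact ENNReal.mul_lt_top ENNReal.ofReal_lt_top (measure_lt_top _ _)
  refine ⟨hint, x₀, hx₀, fun x hx => ?_⟩
  have hh := hpos x hx
  split_ifs with hle
  · have h1 : ∫ ω in {ω | x < |Y ω|}, |Y ω| ∂μ ≤ ∫ ω, |Y ω| ∂μ :=
      setIntegral_le_integral hint.abs (Eventually.of_forall fun ω => abs_nonneg _)
    have : 0 ≤ C * x ^ (1 - α) * h x := by positivity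
    linarith
  · rw [zero_add, integral_eq_lintegral_of_nonneg_ae (Eventually.of_forall fun ω => abs_nonneg _)
      hY.abs.aestronglyMeasurable]
    have h4 : x ^ (1 - α) = x * x ^ (-α) := by
      rw [sub_eq_add_neg, Real.rpow_add hx, Real.rpow_one]
    apply ENNReal.toReal_le_of_le_ofReal (by positivity)
    have := hsup x (not_le.1 hle).le
    rw [htail' x hx] at this
    rw [h4]
    convert this using 2
    ring
end
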